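/- arXiv:2405.01894 — 2 statements merged into one kernel-verified Lean document; each statement's English description precedes it below -/
import Mathlib

section
/- Assume condition (Cond1). Let u_τ ∈ V be such that u_τ ≥ 0, u_τ(x₀) = 0 for some x₀ ∈ (0,1), but u_τ ≢ 0. Then there cannot exist a non-negative strong solution backwards in time, i.e. there is no t₀ < τ and no non-negative strong solution u to problem (Incl) on [t₀,∞) with u(τ) = u_τ. -/
open MeasureTheory Set

noncomputable section

/-- Lebesgue measure restricted to the spatial interval `(0,1)`. -/
def μ01 : Measure ℝ := volume.restrict (Ioo (0:ℝ) 1)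

/-- `H = L²(0,1)`. -/
abbrev Hsp : Type := Lp ℝ 2 μ01

/-- The Heaviside multifunction. -/
def heaviside (s : ℝ) : Set ℝ :=
  if s < 0 then {-1} else if s = 0 then Icc (-1) 1 else {1}

/-- Condition (Cond1). -/
structure Cond1 (b ω : ℝ → ℝ) (b0 b1 ω0 ω1 : ℝ) : Prop where
  contb : Continuous b
  contω : Continuous ω
  b0pos : 0 < b0
  blb : ∀ t, b0 ≤ b t
  bub : ∀ t, b t ≤ b1
  ω0nonneg : 0 ≤ ω0
  ωlb : ∀ t, ω0 ≤ ω t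
  ωub : ∀ t, ω t ≤ ω1

/-- `v ∈ H²(0,1) ∩ H¹₀(0,1)` with (weak) second derivative `w ∈ L²(0,1)`:
`v` has a representative that is continuous on `[0,1]`, vanishes at the boundary,
is differentiable on `(0,1)` and whose derivative is an antiderivative of `w`. -/
def InDomainA (v w : Hsp) : Prop :=
  ∃ vt : ℝ → ℝ, ContinuousOn vt (Icc 0 1) ∧ vt 0 = 0 ∧ vt 1 = 0 ∧
    (∀ᵐ x ∂μ01, vt x = v x) ∧
    ∃ g : ℝ → ℝ,
      (∀ x ∈ Ioo (0:ℝ) 1, HasDerivAt vt (g x) x) ∧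
      ∀ x ∈ Ioo (0:ℝ) 1, ∀ y ∈ Ioo (0:ℝ) 1, g x - g y = ∫ z in y..x, w z

/-- A strong solution of the inclusion on `[τ,∞)`, with explicit data:
`r` is the `L²`-selection, `u'` the time derivative, `uxx` the second spatial derivative. -/
structure IsStrongSolutionWith (b ω : ℝ → ℝ) (τ : ℝ) (u r u' uxx : ℝ → Hsp) : Prop where
  cont : ContinuousOn u (Ici τ)
  rmem : ∀ T, τ < T → MemLp r 2 (volume.restrict (Ioo τ T))
  sel : ∀ᵐ t ∂(volume.restrict (Ioi τ)), ∀ᵐ x ∂μ01,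
      ∃ h ∈ heaviside (u t x), r t x = b t * h + ω t * u t x
  dom : ∀ᵐ t ∂(volume.restrict (Ioi τ)), InDomainA (u t) (uxx t)
  eq : ∀ᵐ t ∂(volume.restrict (Ioi τ)), u' t = r t + uxx t
  fund : ∀ T1 T2 : ℝ, τ < T1 → T1 < T2 →
      IntervalIntegrable u' volume T1 T2 ∧
      ∀ t ∈ Icc T1 T2, u t = u T1 + ∫ s in T1..t, u' s

/-- A strong solution of the inclusion on `[τ,∞)`. -/
def IsStrongSolution (b ω : ℝ → ℝ) (τ : ℝ) (u : ℝ → Hsp) : Prop :=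
  ∃ r u' uxx, IsStrongSolutionWith b ω τ u r u' uxx

/-- The solution is non-negative on `[τ,∞)`. -/
def NonnegOn (u : ℝ → Hsp) (τ : ℝ) : Prop :=
  ∀ t, τ ≤ t → ∀ᵐ x ∂μ01, 0 ≤ u t x

/-- `v` is positive: it has a continuous representative on `[0,1]`
which is strictly positive on `(0,1)`. -/
def IsPositive (v : Hsp) : Prop :=
  ∃ vt : ℝ → ℝ, ContinuousOn vt (Icc 0 1) ∧ (∀ᵐ x ∂μ01, vt x = v x) ∧
    ∀ x ∈ Ioo (0:ℝ) 1, 0 < vt x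


/-- `vt` is a representative of `v` witnessing `v ∈ V = H¹₀(0,1)`:
continuous on `[0,1]`, vanishing at the boundary, with a square-integrable
weak derivative `g`. -/
def InVRep (v : Hsp) (vt : ℝ → ℝ) : Prop :=
  ContinuousOn vt (Icc 0 1) ∧ vt 0 = 0 ∧ vt 1 = 0 ∧ (∀ᵐ x ∂μ01, vt x = v x) ∧
  ∃ g : ℝ → ℝ, MemLp g 2 μ01 ∧
    ∀ x ∈ Icc (0:ℝ) 1, ∀ y ∈ Icc (0:ℝ) 1, vt x - vt y = ∫ z in y..x, g z

open Filter Topology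

lemma ac_of_dist_le {X : Type*} [PseudoMetricSpace X] {f : ℝ → X} {g h : ℝ → ℝ} {a b : ℝ}
    (hg : AbsolutelyContinuousOnInterval g a b) (hh : AbsolutelyContinuousOnInterval h a b)
    (H : ∀ x ∈ uIcc a b, ∀ y ∈ uIcc a b, dist (f x) (f y) ≤ dist (g x) (g y) + dist (h x) (h y)) :
    AbsolutelyContinuousOnInterval f a b := by
  unfold AbsolutelyContinuousOnInterval at *
  apply squeeze_zero' ?_ ?_ (by simpa using hg.add hh)
  · exact Filter.Eventually.of_forall <| fun _ ↦ Finset.sum_nonneg (fun i hi ↦ dist_nonneg)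
  rw [eventually_inf_principal]
  filter_upwards with E hE
  rw [← Finset.sum_add_distrib]
  apply Finset.sum_le_sum
  intro i hi
  have := hE.1 i hi
  exact H _ this.1 _ this.2

lemma mono_of_ac {F : ℝ → ℝ} {a b : ℝ} (hab : a ≤ b)
    (hF : AbsolutelyContinuousOnInterval F a b)
    (hd : ∀ᵐ t, t ∈ Icc a b → 0 ≤ deriv F t) : F a ≤ F b := by
  have h := hF.integral_deriv_eq_sub
  have : 0 ≤ ∫ x in a..b, deriv F x := by
    apply intervalIntegral.integral_nonneg_of_ae_restrict hab
    rw [Filter.EventuallyLE, ae_restrict_iff' measurableSet_Icc]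
    exact hd
  linarith

lemma integrable_H (w : Hsp) : Integrable (w : ℝ → ℝ) μ01 := by
  have : IsFiniteMeasure μ01 := by unfold μ01; infer_instance
  exact (Lp.memLp w).integrable (by norm_num)

lemma ii_H (w : Hsp) {p q : ℝ} (hp : p ∈ Icc (0:ℝ) 1) (hq : q ∈ Icc (0:ℝ) 1) :
    IntervalIntegrable (w : ℝ → ℝ) volume p q := by
  have h := integrable_H w
  have h2 : IntervalIntegrable (w : ℝ → ℝ) volume 0 1 := by
    rw [intervalIntegrable_iff_integrableOn_Ioo_of_le zero_le_one]
    exact h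
  apply h2.mono_set
  rw [uIcc_of_le (zero_le_one)]
  intro x hx
  rcases mem_uIcc.1 hx with h | h <;> constructor <;> linarith [h.1, h.2, hp.1, hp.2, hq.1, hq.2]

lemma nonneg_rep {v : Hsp} {vt : ℝ → ℝ} (hc : ContinuousOn vt (Icc 0 1))
    (hv : ∀ᵐ x ∂μ01, vt x = v x) (hnn : ∀ᵐ x ∂μ01, 0 ≤ v x) :
    ∀ x ∈ Ioo (0:ℝ) 1, 0 ≤ vt x := by
  have h : vt =ᵐ[volume.restrict (Ioo 0 1)] fun x => |vt x| := by
    filter_upwards [hv, hnn] with x h1 h2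
    rw [abs_of_nonneg]; rw [h1]; exact h2
  have hc' := hc.mono Ioo_subset_Icc_self
  have := Measure.eqOn_Ioo_of_ae_eq volume h hc' hc'.abs
  intro x hx
  rw [this hx]; positivity

lemma uxx_zero {w : Hsp} {vt g : ℝ → ℝ}
    (hnn : ∀ x ∈ Ioo (0:ℝ) 1, 0 ≤ vt x)
    (hg : ∀ x ∈ Ioo (0:ℝ) 1, HasDerivAt vt (g x) x)
    (hw : ∀ x ∈ Ioo (0:ℝ) 1, ∀ y ∈ Ioo (0:ℝ) 1, g x - g y = ∫ z in y..x, w z) :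
    ∀ᵐ x ∂μ01, vt x = 0 → w x = 0 := by
  set Z : Set ℝ := {x | x ∈ Ioo (0:ℝ) 1 ∧ vt x = 0} with hZ
  have hgZ : ∀ x ∈ Z, g x = 0 := by
    rintro x ⟨hx, hx0⟩
    apply IsLocalMin.hasDerivAt_eq_zero _ (hg x hx)
    filter_upwards [isOpen_Ioo.mem_nhds hx] with y hy
    rw [hx0]; exact hnn y hy
  have hcount : {x ∈ Z | 𝓝[Z ∩ Ioi x] x = ⊥}.Countable := countable_setOfPred_isolated_right_within
  have h1 : ∀ᵐ x, x ∉ {x ∈ Z | 𝓝[Z ∩ Ioi x] x = ⊥} := by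
    exact hcount.ae_notMem _
  have h2 := (ii_H w (p := 0) (q := 1) (by simp) (by simp)).ae_hasDerivAt_integral
  unfold μ01
  rw [ae_restrict_iff' measurableSet_Ioo]
  filter_upwards [h1, h2] with x hx1 hx2 hx hx0
  have hxZ : x ∈ Z := ⟨hx, hx0⟩
  have hne : (𝓝[Z ∩ Ioi x] x).NeBot := by
    rw [neBot_iff]; intro h; exact hx1 ⟨hxZ, h⟩
  have hd := hx2 (by rw [uIcc_of_le zero_le_one]; exact Ioo_subset_Icc_self hx) (1/2)
    (by rw [uIcc_of_le zero_le_one]; constructor <;> norm_num)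
  have hd' : HasDerivAt g (w x) x := by
    have := hd.add_const (g (1/2))
    apply this.congr_of_eventuallyEq
    filter_upwards [isOpen_Ioo.mem_nhds hx] with y hy
    have := hw y hy (1/2) (by constructor <;> norm_num)
    linarith
  have hu : UniqueDiffWithinAt ℝ Z x := by
    rw [uniqueDiffWithinAt_iff_accPt, accPt_principal_iff_nhdsWithin]
    apply hne.mono
    apply nhdsWithin_mono
    rintro y ⟨hy, hy'⟩
    exact ⟨hy, ne_of_gt hy'⟩
  have k1 : HasDerivWithinAt g 0 Z x :=
    (hasDerivWithinAt_const x Z (0:ℝ)).congr (fun y hy => hgZ y hy) (hgZ x hxZ)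
  exact hu.eq_deriv _ hd'.hasDerivWithinAt k1

lemma ut_nonneg {u : ℝ → Hsp} {u' : Hsp} {t : ℝ} (hd : HasDerivAt u u' t)
    (hnn : ∀ s, t ≤ s → ∀ᵐ x ∂μ01, 0 ≤ u s x) :
    ∀ᵐ x ∂μ01, u t x = 0 → 0 ≤ u' x := by
  have hseq : Tendsto (fun n : ℕ => (1:ℝ) / (n + 1)) atTop (𝓝[≠] 0) := by
    rw [tendsto_nhdsWithin_iff]
    refine ⟨tendsto_one_div_add_atTop_nhds_zero_nat, Eventually.of_forall fun n => ?_⟩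
    have : (0:ℝ) < 1 / (n+1) := by positivity
    exact this.ne'
  have h1 := (hasDerivAt_iff_tendsto_slope_zero.1 hd).comp hseq
  have h2 := tendstoInMeasure_of_tendsto_Lp h1
  obtain ⟨ns, -, h3⟩ := h2.exists_seq_tendsto_ae
  have h4 : ∀ᵐ x ∂μ01, ∀ n : ℕ, u t x = 0 →
      0 ≤ ((fun h : ℝ => h⁻¹ • (u (t + h) - u t)) ((1:ℝ) / (n + 1)) : Hsp) x := by
    rw [ae_all_iff]
    intro n
    have hp : (0:ℝ) < 1 / (n+1) := by positivity
    filter_upwards [hnn (t + 1 / (n+1)) (by linarith),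
      Lp.coeFn_smul ((1:ℝ) / (n+1))⁻¹ (u (t + 1 / (n+1)) - u t),
      Lp.coeFn_sub (u (t + 1 / (n+1))) (u t)] with x k1 k2 k3 k4
    rw [k2, Pi.smul_apply, k3, Pi.sub_apply, k4, sub_zero]
    exact mul_nonneg (by positivity) k1
  filter_upwards [h3, h4] with x k1 k2 k3
  exact ge_of_tendsto' k1 (fun n => k2 (ns n) k3)

lemma ibp {v w : Hsp} {vt g φ φ1 φ2 : ℝ → ℝ} {p q : ℝ} (hp : 0 < p) (hpq : p ≤ q) (hq : q < 1)
    (hnn : ∀ x ∈ Ioo (0:ℝ) 1, 0 ≤ vt x)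
    (hv : ∀ᵐ x ∂μ01, vt x = v x)
    (hg : ∀ x ∈ Ioo (0:ℝ) 1, HasDerivAt vt (g x) x)
    (hw : ∀ x ∈ Ioo (0:ℝ) 1, ∀ y ∈ Ioo (0:ℝ) 1, g x - g y = ∫ z in y..x, w z)
    (h1 : ∀ x, HasDerivAt φ (φ1 x) x) (h2 : ∀ x, HasDerivAt φ1 (φ2 x) x)
    (hc : Continuous φ2) (hφp : φ p = 0) (hφq : φ q = 0) (h1p : 0 ≤ φ1 p) (h1q : φ1 q ≤ 0) :
    ∫ x in p..q, v x * φ2 x ≤ ∫ x in p..q, w x * φ x := by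
  have hsub : uIcc p q ⊆ Ioo 0 1 := by
    rw [uIcc_of_le hpq]; intro x hx; exact ⟨by linarith [hx.1], by linarith [hx.2]⟩
  have hpI : p ∈ Ioo (0:ℝ) 1 := hsub left_mem_uIcc
  have hqI : q ∈ Ioo (0:ℝ) 1 := hsub right_mem_uIcc
  have hwi : IntervalIntegrable (w : ℝ → ℝ) volume p q :=
    ii_H w (Ioo_subset_Icc_self hpI) (Ioo_subset_Icc_self hqI)
  have hc1 : Continuous φ1 := continuous_iff_continuousAt.2 fun x => (h2 x).continuousAt
  have hφC : ContDiff ℝ 1 φ := by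
    rw [contDiff_one_iff_deriv]
    refine ⟨fun x => (h1 x).differentiableAt, ?_⟩
    rw [show deriv φ = φ1 from funext fun x => (h1 x).deriv]; exact hc1
  have hφac : AbsolutelyContinuousOnInterval φ p q := hφC.contDiffOn.absolutelyContinuousOnInterval
  let W : ℝ → ℝ := fun x => ∫ z in p..x, w z
  have hWac : AbsolutelyContinuousOnInterval W p q :=
    hwi.absolutelyContinuousOnInterval_intervalIntegral left_mem_uIcc
  have e1 := hφac.integral_mul_deriv_eq_deriv_mul hWac
  have e2 : ∫ x in p..q, φ x * deriv W x = ∫ x in p..q, w x * φ x := by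
    apply intervalIntegral.integral_congr_ae
    filter_upwards [hwi.ae_hasDerivAt_integral] with x hx hx'
    rw [(hx (uIoc_subset_uIcc hx') p left_mem_uIcc).deriv, mul_comm]
  have hWg : ∀ x ∈ uIcc p q, W x = g x - g p := fun x hx => (hw x (hsub hx) p hpI).symm
  have hgc : ContinuousOn g (uIcc p q) := by
    have : ContinuousOn (fun x => W x + g p) (uIcc p q) := hWac.continuousOn.add continuousOn_const
    apply this.congr; intro x hx; simp only; rw [hWg x hx]; ring
  have e3 : ∫ x in p..q, deriv φ x * W x = (∫ x in p..q, φ1 x * g x) := by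
    have : ∫ x in p..q, deriv φ x * W x = ∫ x in p..q, (φ1 x * g x - φ1 x * g p) := by
      apply intervalIntegral.integral_congr
      intro x hx; simp only; rw [hWg x hx, (h1 x).deriv]; ring
    rw [this, intervalIntegral.integral_sub, intervalIntegral.integral_mul_const,
      intervalIntegral.integral_eq_sub_of_hasDerivAt (fun x _ => h1 x) (hc1.intervalIntegrable _ _),
      hφp, hφq]
    · ring
    · exact (hc1.continuousOn.mul hgc).intervalIntegrable
    · exact (hc1.mul continuous_const).intervalIntegrable _ _
  have e4 := intervalIntegral.integral_mul_deriv_eq_deriv_mul (a := p) (b := q) (u := φ1) (u' := φ2)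
    (v := vt) (v' := g) (fun x _ => h2 x) (fun x hx => hg x (hsub hx))
    (hc.intervalIntegrable _ _) hgc.intervalIntegrable
  have e5 : ∫ x in p..q, v x * φ2 x = ∫ x in p..q, φ2 x * vt x := by
    apply intervalIntegral.integral_congr_ae
    have := (ae_restrict_iff' measurableSet_Ioo).1 hv
    filter_upwards [this] with x hx hx'
    rw [hx (hsub (uIoc_subset_uIcc hx')), mul_comm]
  rw [← e2, e1, e3, e4, e5, hφp, hφq]
  have := mul_nonneg h1p (hnn p hpI)
  have := mul_nonneg (neg_nonneg.2 h1q) (hnn q hqI)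
  linarith

open scoped Classical in
def toH (p q : ℝ) (f : ℝ → ℝ) : Hsp :=
  if h : MemLp (indicator (Icc p q) f) 2 μ01 then h.toLp _ else 0

instance prob01 : IsProbabilityMeasure μ01 := ⟨by simp [μ01]⟩

lemma memLp_ind {p q : ℝ} {f : ℝ → ℝ} (hf : Continuous f) :
    MemLp (indicator (Icc p q) f) 2 μ01 := by
  obtain ⟨C, hC⟩ := isCompact_Icc.exists_bound_of_continuousOn (s := Icc p q) hf.continuousOn
  refine MemLp.of_bound (C := |C|) (hf.measurable.indicator measurableSet_Icc).aestronglyMeasurable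
    (Eventually.of_forall fun x => ?_)
  by_cases hx : x ∈ Icc p q
  · rw [indicator_of_mem hx]; exact (hC x hx).trans (le_abs_self _)
  · rw [indicator_of_notMem hx]; simp

lemma toH_ae {p q : ℝ} {f : ℝ → ℝ} (hf : Continuous f) :
    (toH p q f : ℝ → ℝ) =ᵐ[μ01] indicator (Icc p q) f := by
  unfold toH
  rw [dif_pos (memLp_ind hf)]
  exact MemLp.coeFn_toLp _

lemma toH_norm {p q C : ℝ} {f : ℝ → ℝ} (hf : Continuous f) (hC : 0 ≤ C)
    (h : ∀ x ∈ Icc p q, |f x| ≤ C) : ‖toH p q f‖ ≤ C := by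
  have := Lp.norm_le_of_ae_bound (f := toH p q f) (C := C) hC (by
    filter_upwards [toH_ae (p := p) (q := q) hf] with x hx
    rw [hx]
    by_cases hx : x ∈ Icc p q
    · rw [indicator_of_mem hx]; exact h x hx
    · rw [indicator_of_notMem hx]; simpa using hC)
  simpa [measureUnivNNReal] using this

lemma toH_lin {p q c : ℝ} {f g k : ℝ → ℝ} (hf : Continuous f) (hg : Continuous g)
    (hk : Continuous k) :
    toH p q f - toH p q g - c • toH p q k = toH p q (fun x => f x - g x - c * k x) := by
  apply Lp.ext
  have hc : Continuous (fun x => f x - g x - c * k x) := by fun_prop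
  filter_upwards [toH_ae (p := p) (q := q) hf, toH_ae (p := p) (q := q) hg,
    toH_ae (p := p) (q := q) hk, toH_ae (p := p) (q := q) hc,
    Lp.coeFn_sub (toH p q f - toH p q g) (c • toH p q k),
    Lp.coeFn_sub (toH p q f) (toH p q g), Lp.coeFn_smul c (toH p q k)] with x h1 h2 h3 h4 h5 h6 h7
  rw [h5, Pi.sub_apply, h6, Pi.sub_apply, h7, Pi.smul_apply, h1, h2, h3, h4]
  by_cases hx : x ∈ Icc p q
  · simp [indicator_of_mem hx]
  · simp [indicator_of_notMem hx]

lemma inner_toH {p q : ℝ} {f : ℝ → ℝ} (hp : 0 < p) (hpq : p ≤ q) (hq : q < 1)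
    (v : Hsp) (hf : Continuous f) :
    inner ℝ v (toH p q f) = ∫ x in p..q, v x * f x := by
  rw [L2.inner_def, intervalIntegral.integral_of_le hpq, ← integral_Icc_eq_integral_Ioc,
    ← integral_indicator measurableSet_Icc]
  have h1 : ∫ x, indicator (Icc p q) (fun x => v x * f x) x =
      ∫ x, indicator (Icc p q) (fun x => v x * f x) x ∂μ01 := by
    unfold μ01
    rw [← integral_indicator measurableSet_Ioo]
    congr 1
    ext x
    by_cases hx : x ∈ Icc p q
    · rw [indicator_of_mem (a := x) (s := Ioo (0:ℝ) 1)]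
      exact ⟨by linarith [hx.1], by linarith [hx.2]⟩
    · rw [indicator_of_notMem hx]
      by_cases hx' : x ∈ Ioo (0:ℝ) 1
      · rw [indicator_of_mem hx', indicator_of_notMem hx]
      · rw [indicator_of_notMem hx']
  rw [h1]
  apply integral_congr_ae
  filter_upwards [toH_ae (p := p) (q := q) hf] with x hx
  rw [hx]
  by_cases hx : x ∈ Icc p q
  · simp [indicator_of_mem hx, mul_comm]
  · simp [indicator_of_notMem hx]

/-- Gaussian -/
def Gs (σ y : ℝ) : ℝ := Real.exp (-y^2 / (4*σ)) / Real.sqrt σ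

def Gd (σ y : ℝ) : ℝ := Gs σ y * (y^2/(4*σ^2) - 1/(2*σ))

lemma Gs_pos {σ y : ℝ} (hσ : 0 < σ) : 0 < Gs σ y := by
  unfold Gs; have := Real.sqrt_pos.2 hσ; positivity

lemma Gs_cont (σ : ℝ) : Continuous (Gs σ) := by unfold Gs; fun_prop
lemma Gd_cont (σ : ℝ) : Continuous (Gd σ) := by unfold Gd Gs; fun_prop

lemma Gs_dy {σ : ℝ} (hσ : 0 < σ) (y : ℝ) : HasDerivAt (Gs σ) (Gs σ y * (-y/(2*σ))) y := by
  have h : HasDerivAt (fun y : ℝ => -y^2/(4*σ)) (-(2*y)/(4*σ)) y := by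
    have := ((hasDerivAt_pow 2 y).neg).div_const (4*σ)
    convert! this using 1; simp
  have := h.exp.div_const (Real.sqrt σ)
  convert! this using 1
  unfold Gs; field_simp; ring

lemma Gs_dyy {σ : ℝ} (hσ : 0 < σ) (y : ℝ) :
    HasDerivAt (fun y => Gs σ y * (-y/(2*σ))) (Gd σ y) y := by
  have h : HasDerivAt (fun y : ℝ => -y/(2*σ)) (-1/(2*σ)) y :=
    ((hasDerivAt_id y).neg).div_const (2*σ)
  have := (Gs_dy hσ y).mul h
  convert! this using 1
  unfold Gd; field_simp; ring

lemma Gs_dσ {σ : ℝ} (hσ : 0 < σ) (y : ℝ) : HasDerivAt (fun s => Gs s y) (Gd σ y) σ := by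
  have h0 : HasDerivAt (fun s : ℝ => 4*s) 4 σ := by
    simpa using (hasDerivAt_id σ).const_mul (4:ℝ)
  have h : HasDerivAt (fun s : ℝ => -y^2/(4*s)) (-(-y^2*4)/(4*σ)^2) σ := by
    have := (hasDerivAt_const σ (-y^2)).div h0 (by positivity)
    convert! this using 1; ring
  have hs := (Real.hasDerivAt_sqrt hσ.ne')
  have hsp := Real.sqrt_pos.2 hσ
  have := h.exp.div hs hsp.ne'
  convert! this using 1
  unfold Gd Gs
  have e : Real.sqrt σ ^ 2 = σ := Real.sq_sqrt hσ.le
  have e' : (1:ℝ)/(2*σ) = 1/(2*Real.sqrt σ^2) := by rw [e]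
  rw [e']
  field_simp

/-- time dependent test function -/
def Ps (x₀ L σ x : ℝ) : ℝ := Gs σ (x - x₀) - Gs σ L
def Pd (x₀ L σ x : ℝ) : ℝ := Gd σ (x - x₀) - Gd σ L

lemma Ps_cont (x₀ L σ : ℝ) : Continuous (Ps x₀ L σ) := by
  have := Gs_cont σ; unfold Ps; fun_prop
lemma Pd_cont (x₀ L σ : ℝ) : Continuous (Pd x₀ L σ) := by
  have := Gd_cont σ; unfold Pd; fun_prop

lemma Ps_dσ {x₀ L σ x : ℝ} (hσ : 0 < σ) : HasDerivAt (fun s => Ps x₀ L s x) (Pd x₀ L σ x) σ :=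
  (Gs_dσ hσ _).sub (Gs_dσ hσ _)

lemma Pd_contDiff (x₀ L a b c d : ℝ) (ha : 0 < a) :
    ContDiffOn ℝ 1 (fun z : ℝ × ℝ => Pd x₀ L z.1 z.2) (Icc a b ×ˢ Icc c d) := by
  unfold Pd Gd Gs
  intro z hz
  have hz1 : 0 < z.1 := lt_of_lt_of_le ha hz.1.1
  have := Real.sqrt_pos.2 hz1
  apply ContDiffAt.contDiffWithinAt
  have hs : ContDiffAt ℝ 1 (fun z : ℝ × ℝ => Real.sqrt z.1) z :=
    contDiffAt_fst.sqrt hz1.ne'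
  have h4 : ContDiffAt ℝ 1 (fun z : ℝ × ℝ => 4 * z.1) z := by fun_prop
  have h2 : ContDiffAt ℝ 1 (fun z : ℝ × ℝ => 2 * z.1) z := by fun_prop
  have h5 : ContDiffAt ℝ 1 (fun z : ℝ × ℝ => 4 * z.1^2) z := by fun_prop
  have key : ∀ k : ℝ × ℝ → ℝ, ContDiffAt ℝ 1 k z → ContDiffAt ℝ 1 (fun z : ℝ × ℝ =>
      Real.exp (-(k z)^2 / (4*z.1)) / Real.sqrt z.1 * ((k z)^2/(4*z.1^2) - 1/(2*z.1))) z := by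
    intro k hk
    have hk2 : ContDiffAt ℝ 1 (fun z => (k z)^2) z := hk.pow 2
    exact ((hk2.neg.div h4 (by positivity)).exp.div hs (by positivity)).mul
      ((hk2.div h5 (by positivity)).sub (contDiffAt_const.div h2 (by positivity)))
  exact (key (fun z => z.2 - x₀) (by fun_prop)).sub (key (fun _ => L) contDiffAt_const)

lemma Psi_deriv {x₀ L p q σ : ℝ} (hσ : 0 < σ) :
    HasDerivAt (fun s => toH p q (Ps x₀ L s)) (toH p q (Pd x₀ L σ)) σ := by
  obtain ⟨K, hK⟩ := (Pd_contDiff x₀ L (σ/2) (2*σ) p q (by positivity)).exists_lipschitzOnWith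
    one_ne_zero ((convex_Icc _ _).prod (convex_Icc _ _)) (isCompact_Icc.prod isCompact_Icc)
  rw [hasDerivAt_iff_isLittleO]
  have hmem : Icc (σ/2) (2*σ) ∈ 𝓝 σ := Icc_mem_nhds (by linarith) (by linarith)
  have hO : (fun s => toH p q (Ps x₀ L s) - toH p q (Ps x₀ L σ) - (s - σ) • toH p q (Pd x₀ L σ))
      =O[𝓝 σ] fun s => (s - σ)^2 := by
    apply Asymptotics.IsBigO.of_bound K
    filter_upwards [hmem] with s hs
    rw [toH_lin (Ps_cont _ _ _) (Ps_cont _ _ _) (Pd_cont _ _ _)]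
    apply toH_norm
    · have := Ps_cont x₀ L s
      have := Ps_cont x₀ L σ
      have := Pd_cont x₀ L σ
      fun_prop
    · positivity
    intro x hx
    have hσm : σ ∈ Icc (σ/2) (2*σ) := mem_of_mem_nhds hmem
    have hsub : uIcc σ s ⊆ Icc (σ/2) (2*σ) := by
      intro y hy; exact (ordConnected_Icc.uIcc_subset hσm hs) hy
    have hb : ∀ y ∈ uIcc σ s, ‖Pd x₀ L y x - Pd x₀ L σ x‖ ≤ K * |s - σ| := by
      intro y hy
      have := hK.dist_le_mul (y, x) ⟨hsub hy, hx⟩ (σ, x) ⟨hσm, hx⟩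
      simp only [Prod.dist_eq, dist_self, Real.dist_eq] at this
      rw [max_eq_left (abs_nonneg _)] at this
      refine this.trans ?_
      exact mul_le_mul_of_nonneg_left (abs_sub_left_of_mem_uIcc hy) K.2
    have := Convex.norm_image_sub_le_of_norm_hasDerivWithin_le
      (f := fun y => Ps x₀ L y x - y * Pd x₀ L σ x)
      (f' := fun y => Pd x₀ L y x - Pd x₀ L σ x) (s := uIcc σ s) (x := σ) (y := s)
      (C := K * |s - σ|)
      (fun y hy => by
        have hy0 : 0 < y := lt_of_lt_of_le (by positivity) (hsub hy).1
        have h1 := (Ps_dσ (x₀ := x₀) (L := L) (x := x) hy0).sub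
          ((hasDerivAt_id y).mul_const (Pd x₀ L σ x))
        simp only [one_mul] at h1
        exact h1.hasDerivWithinAt)
      hb (convex_uIcc _ _) left_mem_uIcc right_mem_uIcc
    simp only [Real.norm_eq_abs] at this
    rw [Real.norm_eq_abs, abs_pow, sq, ← mul_assoc]
    refine le_trans (le_of_eq ?_) this
    congr 1; ring
  refine hO.trans_isLittleO ?_
  have : (fun s : ℝ => (s - σ)^2) = fun s => (s-σ) * (s - σ) := by ext; ring
  rw [this]
  have h0 : (fun s : ℝ => s - σ) =o[𝓝 σ] fun _ => (1:ℝ) := by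
    rw [Asymptotics.isLittleO_one_iff]
    have : Tendsto (fun s : ℝ => s - σ) (𝓝 σ) (𝓝 (σ - σ)) := (continuous_id.sub continuous_const).tendsto _
    simpa using this
  simpa using h0.mul_isBigO (Asymptotics.isBigO_refl (fun s : ℝ => s - σ) (𝓝 σ))

lemma Psi_lip (x₀ L p q : ℝ) {a b : ℝ} (ha : 0 < a) : ∃ C : ℝ, 0 ≤ C ∧
    (∀ s ∈ Icc a b, ∀ t ∈ Icc a b,
      ‖toH p q (Ps x₀ L s) - toH p q (Ps x₀ L t)‖ ≤ C * |s - t|) := by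
  obtain ⟨C, hC⟩ := (isCompact_Icc.prod isCompact_Icc).exists_bound_of_continuousOn
    (Pd_contDiff x₀ L a b p q ha).continuousOn
  refine ⟨|C|, abs_nonneg _, fun s hs t ht => ?_⟩
  have := Convex.norm_image_sub_le_of_norm_hasDerivWithin_le
    (f := fun s => toH p q (Ps x₀ L s)) (f' := fun s => toH p q (Pd x₀ L s)) (s := Icc a b)
    (x := t) (y := s) (C := |C|)
    (fun y hy => (Psi_deriv (lt_of_lt_of_le ha hy.1)).hasDerivWithinAt)
    (fun y hy => toH_norm (Pd_cont _ _ _) (abs_nonneg _)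
      (fun x hx => (hC (y, x) ⟨hy, hx⟩).trans (le_abs_self _)))
    (convex_Icc _ _) ht hs
  simpa using this

lemma Ps_nonneg {x₀ L σ x : ℝ} (hσ : 0 < σ) (hx : x ∈ Icc (x₀ - L) (x₀ + L)) :
    0 ≤ Ps x₀ L σ x := by
  have h : (x - x₀)^2 ≤ L^2 := by
    rw [sq_le_sq]; refine le_trans ?_ (le_abs_self L)
    rw [abs_le]; constructor <;> linarith [hx.1, hx.2]
  unfold Ps Gs
  rw [sub_nonneg]
  gcongr

lemma Ps_pos {x₀ L σ x : ℝ} (hσ : 0 < σ) (hx : x ∈ Ioo (x₀ - L) (x₀ + L)) :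
    0 < Ps x₀ L σ x := by
  have h : (x - x₀)^2 < L^2 := by
    rw [sq_lt_sq]; refine lt_of_lt_of_le ?_ (le_abs_self L)
    rw [abs_lt]; constructor <;> linarith [hx.1, hx.2]
  have := Real.sqrt_pos.2 hσ
  unfold Ps Gs
  rw [sub_pos]
  gcongr

lemma Gd_L_nonneg {L σ : ℝ} (hσ : 0 < σ) (h : σ ≤ L^2/2) : 0 ≤ Gd σ L := by
  unfold Gd
  apply mul_nonneg (Gs_pos hσ).le
  rw [sub_nonneg, div_le_div_iff₀ (by positivity) (by positivity)]
  nlinarith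

lemma r_nonneg {b ω : ℝ → ℝ} {b0 b1 ω0 ω1 : ℝ} (hC : Cond1 b ω b0 b1 ω0 ω1) {t : ℝ}
    {u r u' uxx : Hsp}
    (hnn : ∀ᵐ x ∂μ01, 0 ≤ u x)
    (hsel : ∀ᵐ x ∂μ01, ∃ h ∈ heaviside (u x), r x = b t * h + ω t * u x)
    (hut : ∀ᵐ x ∂μ01, u x = 0 → 0 ≤ u' x)
    (huxx : ∀ᵐ x ∂μ01, u x = 0 → uxx x = 0)
    (heq : u' = r + uxx) : ∀ᵐ x ∂μ01, uxx x ≤ u' x := by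
  have he := Lp.coeFn_add r uxx
  rw [← heq] at he
  filter_upwards [hnn, hsel, hut, huxx, he] with x h1 h2 h3 h4 h5
  rcases h1.eq_or_lt with h | h
  · rw [h4 h.symm]; exact h3 h.symm
  · obtain ⟨k, hk, hr⟩ := h2
    have : k = 1 := by
      unfold heaviside at hk
      rw [if_neg (not_lt.2 h.le), if_neg h.ne'] at hk
      exact hk
    rw [h5, Pi.add_apply, hr, this]
    have := hC.blb t
    have := hC.b0pos
    have := mul_nonneg (hC.ω0nonneg.trans (hC.ωlb t)) h.le
    linarith

lemma deriv_nonneg_pt {v w u' : Hsp} {x₀ L σ : ℝ} (hL : 0 < L) (h0 : 0 < x₀ - L) (h1 : x₀ + L < 1)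
    (hσ : 0 < σ) (hσL : σ ≤ L^2/2) (hdom : InDomainA v w) (hnn : ∀ᵐ x ∂μ01, 0 ≤ v x)
    (hle : ∀ᵐ x ∂μ01, w x ≤ u' x) :
    0 ≤ inner ℝ v (-toH (x₀ - L) (x₀ + L) (Pd x₀ L σ)) +
      inner ℝ u' (toH (x₀ - L) (x₀ + L) (Ps x₀ L σ)) := by
  obtain ⟨vt, hc, -, -, hv, g, hg, hw⟩ := hdom
  have hpq : x₀ - L ≤ x₀ + L := by linarith
  have hvt := nonneg_rep hc hv hnn
  have hI : Icc (x₀ - L) (x₀ + L) ⊆ Ioo 0 1 := fun x hx =>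
    ⟨by linarith [hx.1], by linarith [hx.2]⟩
  have hpI : x₀ - L ∈ Icc (0:ℝ) 1 := ⟨by linarith, by linarith⟩
  have hqI : x₀ + L ∈ Icc (0:ℝ) 1 := ⟨by linarith, by linarith⟩
  rw [inner_neg_right, inner_toH h0 hpq h1 _ (Pd_cont _ _ _),
    inner_toH h0 hpq h1 _ (Ps_cont _ _ _)]
  have hGdc : Continuous (fun x => Gd σ (x - x₀)) := (Gd_cont σ).comp (by fun_prop)
  have k1 := ibp (φ := Ps x₀ L σ) (φ1 := fun x => Gs σ (x - x₀) * (-(x - x₀)/(2*σ)))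
    (φ2 := fun x => Gd σ (x - x₀)) h0 hpq h1 hvt hv hg hw
    (fun x => by
      have := ((Gs_dy hσ (x - x₀)).comp_sub_const x x₀).sub_const (Gs σ L)
      exact this)
    (fun x => by
      have := ((Gs_dyy hσ (x - x₀)).comp_sub_const x x₀)
      exact this)
    hGdc
    (by simp [Ps, Gs]) (by simp [Ps, Gs])
    (by have := Gs_pos (y := -L) hσ
        simp only [sub_sub_cancel_left, neg_neg]; positivity)
    (by have := Gs_pos (y := L) hσ
        simp only [add_sub_cancel_left]
        rw [neg_div, mul_neg, neg_nonpos]; positivity)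
  have k2 : ∫ x in (x₀ - L)..(x₀ + L), w x * Ps x₀ L σ x ≤
      ∫ x in (x₀ - L)..(x₀ + L), u' x * Ps x₀ L σ x := by
    apply intervalIntegral.integral_mono_ae_restrict hpq
    · exact (ii_H w hpI hqI).mul_continuousOn (Ps_cont _ _ _).continuousOn
    · exact (ii_H u' hpI hqI).mul_continuousOn (Ps_cont _ _ _).continuousOn
    · rw [Filter.EventuallyLE, ae_restrict_iff' measurableSet_Icc]
      filter_upwards [(ae_restrict_iff' measurableSet_Ioo).1 hle] with x hx hx'
      exact mul_le_mul_of_nonneg_right (hx (hI hx')) (Ps_nonneg hσ hx')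
  have k3 : ∫ x in (x₀ - L)..(x₀ + L), v x * Pd x₀ L σ x ≤
      ∫ x in (x₀ - L)..(x₀ + L), v x * Gd σ (x - x₀) := by
    apply intervalIntegral.integral_mono_ae_restrict hpq
    · exact (ii_H v hpI hqI).mul_continuousOn (Pd_cont _ _ _).continuousOn
    · exact (ii_H v hpI hqI).mul_continuousOn hGdc.continuousOn
    · rw [Filter.EventuallyLE, ae_restrict_iff' measurableSet_Icc]
      filter_upwards [(ae_restrict_iff' measurableSet_Ioo).1 hnn] with x hx hx'
      apply mul_le_mul_of_nonneg_left _ (hx (hI hx'))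
      have := Gd_L_nonneg hσ hσL
      unfold Pd; linarith
  linarith

lemma key_mono {b ω : ℝ → ℝ} {b0 b1 ω0 ω1 : ℝ} (hC : Cond1 b ω b0 b1 ω0 ω1) {t₀ : ℝ}
    {u r u' uxx : ℝ → Hsp} (hu : IsStrongSolutionWith b ω t₀ u r u' uxx) (hnn : NonnegOn u t₀)
    {x₀ L : ℝ} (hL : 0 < L) (h0 : 0 < x₀ - L) (h1 : x₀ + L < 1)
    {s τ ρ : ℝ} (hs : t₀ < s) (hsτ : s ≤ τ) (hρ : 0 < ρ) (hρL : τ - s + ρ ≤ L^2/2) :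
    inner ℝ (u s) (toH (x₀ - L) (x₀ + L) (Ps x₀ L (τ + ρ - s))) ≤
    inner ℝ (u τ) (toH (x₀ - L) (x₀ + L) (Ps x₀ L ρ)) := by
  set Ψ : ℝ → Hsp := fun t => toH (x₀ - L) (x₀ + L) (Ps x₀ L (τ + ρ - t)) with hΨ
  obtain ⟨hint, hfund⟩ := hu.fund s (τ + 1) hs (by linarith)
  have hΨd : ∀ t ≤ τ, HasDerivAt Ψ (-toH (x₀ - L) (x₀ + L) (Pd x₀ L (τ + ρ - t))) t := by
    intro t ht
    have := (Psi_deriv (x₀ := x₀) (L := L) (p := x₀ - L) (q := x₀ + L)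
      (σ := τ + ρ - t) (by linarith)).comp_const_sub (τ + ρ) t
    exact this
  have hmain := mono_of_ac (F := fun t => inner ℝ (u t) (Ψ t)) hsτ ?_ ?_
  · have e : Ψ τ = toH (x₀ - L) (x₀ + L) (Ps x₀ L ρ) := by simp [hΨ]
    rw [← e]; exact hmain
  · -- absolute continuity
    have hucont : ContinuousOn u (Icc s τ) := hu.cont.mono fun x hx => by
      have := hx.1; simp only [mem_Ici]; linarith
    have hΨcont : ContinuousOn Ψ (Icc s τ) := fun t ht =>
      (hΨd t ht.2).continuousAt.continuousWithinAt
    obtain ⟨M2, hM2⟩ := isCompact_Icc.exists_bound_of_continuousOn hucont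
    obtain ⟨M1, hM1⟩ := isCompact_Icc.exists_bound_of_continuousOn hΨcont
    obtain ⟨C, hC0, hClip⟩ := Psi_lip x₀ L (x₀ - L) (x₀ + L) (a := ρ) (b := τ + ρ - s) hρ
    have hM1' : 0 ≤ M1 := (norm_nonneg _).trans (hM1 s ⟨le_rfl, hsτ⟩)
    have hM2' : 0 ≤ M2 := (norm_nonneg _).trans (hM2 s ⟨le_rfl, hsτ⟩)
    have hintn : IntervalIntegrable (fun t => ‖u' t‖) volume s τ := by
      apply hint.norm.mono_set
      rw [uIcc_of_le hsτ, uIcc_of_le (by linarith)]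
      exact Icc_subset_Icc_right (by linarith)
    have hU := hintn.absolutelyContinuousOnInterval_intervalIntegral (c := s) left_mem_uIcc
    have hId : AbsolutelyContinuousOnInterval (fun t : ℝ => t) s τ :=
      contDiff_id.contDiffOn.absolutelyContinuousOnInterval
    apply ac_of_dist_le (hU.const_mul M1) (hId.const_mul (M2 * C))
    intro x hx y hy
    have hxy : uIcc y x ⊆ uIcc s (τ+1) := by
      rw [uIcc_of_le hsτ] at hx hy
      rw [uIcc_of_le (show s ≤ τ + 1 by linarith)]
      apply ordConnected_Icc.uIcc_subset
      · exact ⟨hy.1, by linarith [hy.2]⟩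
      · exact ⟨hx.1, by linarith [hx.2]⟩
    have hux : u x - u y = ∫ z in y..x, u' z := by
      have hsx : uIcc s x ⊆ uIcc s (τ+1) := by
        rw [uIcc_of_le hsτ] at hx
        rw [uIcc_of_le (show s ≤ τ + 1 by linarith), uIcc_of_le hx.1]
        exact Icc_subset_Icc_right (by linarith [hx.2])
      have hsy : uIcc s y ⊆ uIcc s (τ+1) := by
        rw [uIcc_of_le hsτ] at hy
        rw [uIcc_of_le (show s ≤ τ + 1 by linarith), uIcc_of_le hy.1]
        exact Icc_subset_Icc_right (by linarith [hy.2])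
      rw [uIcc_of_le hsτ] at hx hy
      rw [hfund x ⟨hx.1, by linarith [hx.2]⟩, hfund y ⟨hy.1, by linarith [hy.2]⟩,
        add_sub_add_left_eq_sub, intervalIntegral.integral_interval_sub_left
          (hint.mono_set hsx) (hint.mono_set hsy)]
    have hun : ‖u x - u y‖ ≤ dist (∫ v in s..x, ‖u' v‖) (∫ v in s..y, ‖u' v‖) := by
      rw [hux, Real.dist_eq, intervalIntegral.integral_interval_sub_left]
      · exact intervalIntegral.norm_integral_le_abs_integral_norm
      · exact hintn.mono_set (uIcc_subset_uIcc_left hx)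
      · exact hintn.mono_set (uIcc_subset_uIcc_left hy)
    rw [uIcc_of_le hsτ] at hx hy
    have hΨn : ‖Ψ x - Ψ y‖ ≤ C * |x - y| := by
      have := hClip (τ + ρ - x) ⟨by linarith [hx.2], by linarith [hx.1]⟩
        (τ + ρ - y) ⟨by linarith [hy.2], by linarith [hy.1]⟩
      refine this.trans (le_of_eq ?_)
      rw [sub_sub_sub_cancel_left, abs_sub_comm]
    have hsplit : inner ℝ (u x) (Ψ x) - inner ℝ (u y) (Ψ y) =
        inner ℝ (u x - u y) (Ψ x) + inner ℝ (u y) (Ψ x - Ψ y) := by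
      rw [inner_sub_left, inner_sub_right]; ring
    calc dist (inner ℝ (u x) (Ψ x)) (inner ℝ (u y) (Ψ y))
        = |inner ℝ (u x - u y) (Ψ x) + inner ℝ (u y) (Ψ x - Ψ y)| := by
          rw [Real.dist_eq, hsplit]
      _ ≤ |inner ℝ (u x - u y) (Ψ x)| + |inner ℝ (u y) (Ψ x - Ψ y)| := abs_add_le _ _
      _ ≤ ‖u x - u y‖ * ‖Ψ x‖ + ‖u y‖ * ‖Ψ x - Ψ y‖ :=
          add_le_add (abs_real_inner_le_norm _ _) (abs_real_inner_le_norm _ _)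
      _ ≤ dist (∫ v in s..x, ‖u' v‖) (∫ v in s..y, ‖u' v‖) * M1 + M2 * (C * |x - y|) := by
          gcongr
          · exact hM1 x hx
          · exact hM2 y hy
      _ = dist (M1 * ∫ v in s..x, ‖u' v‖) (M1 * ∫ v in s..y, ‖u' v‖)
          + dist (M2 * C * x) (M2 * C * y) := by
          simp only [Real.dist_eq]
          rw [← mul_sub, ← mul_sub, abs_mul, abs_mul, abs_of_nonneg hM1',
            abs_of_nonneg (mul_nonneg hM2' hC0)]
          ring
  · -- derivative
    have hne : ∀ᵐ t : ℝ, t ≠ s := by simp [ae_iff, measure_singleton]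
    filter_upwards [hne, hint.ae_hasDerivAt_integral,
      (ae_restrict_iff' measurableSet_Ioi).1 hu.sel,
      (ae_restrict_iff' measurableSet_Ioi).1 hu.dom,
      (ae_restrict_iff' measurableSet_Ioi).1 hu.eq] with t hts hd hsel hdom heq ht
    have htt : t₀ < t := by linarith [ht.1]
    have hst : s < t := lt_of_le_of_ne ht.1 (Ne.symm hts)
    have hsT : uIcc s (τ+1) = Icc s (τ+1) := uIcc_of_le (by linarith)
    have hd' : HasDerivAt u (u' t) t := by
      have := (hd (by rw [hsT]; exact ⟨ht.1, by linarith [ht.2]⟩) s left_mem_uIcc).const_add (u s)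
      apply this.congr_of_eventuallyEq
      filter_upwards [Icc_mem_nhds hst (show t < τ + 1 by linarith [ht.2])] with z hz
      exact hfund z hz
    have hnt := hnn t htt.le
    have hut := ut_nonneg hd' (fun z hz => hnn z (by linarith))
    have hdm := hdom htt
    have huxx : ∀ᵐ x ∂μ01, u t x = 0 → uxx t x = 0 := by
      obtain ⟨vt, hc, -, -, hv, g, hg, hw⟩ := hdom htt
      filter_upwards [hv, uxx_zero (nonneg_rep hc hv hnt) hg hw] with x e1 e2 e3
      exact e2 (e1.trans e3)
    have hle := r_nonneg hC hnt (hsel htt) hut huxx (heq htt)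
    have hF := hd'.inner ℝ (hΨd t ht.2)
    rw [hF.deriv]
    exact deriv_nonneg_pt hL h0 h1 (by linarith [ht.2]) (by linarith [ht.1]) hdm hnt hle

lemma gauss_lim {vt : ℝ → ℝ} {p q x₀ : ℝ} (hc : ContinuousOn vt (Icc p q)) (hx : x₀ ∈ Ioo p q)
    (hz : vt x₀ = 0) :
    Tendsto (fun c : ℝ => ∫ x in p..q, vt x * Gs (1/c^2) (x - x₀)) atTop (𝓝 0) := by
  have hpq : p ≤ q := (hx.1.trans hx.2).le
  set N : ℝ := Real.sqrt (Real.pi / (1/4)) with hN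
  have hNp : 0 < N := Real.sqrt_pos.2 (by positivity)
  set φ : ℝ → ℝ := fun z => Real.exp (-(1/4) * z^2) / N with hφ
  have h1 : ∫ x, φ x = 1 := by
    simp only [hφ]
    rw [integral_div, integral_gaussian, ← hN, div_self hNp.ne']
  have h2 : Tendsto (fun x : ℝ => ‖x‖ ^ Module.finrank ℝ ℝ * φ x) (Bornology.cobounded ℝ) (𝓝 0) := by
    have ht : Tendsto (fun y : ℝ => y^1 * Real.exp (-(1/4) * y^2) / N) atTop (𝓝 0) := by
      have h := (rpow_mul_exp_neg_mul_sq_isLittleO_exp_neg (b := 1/4) (by norm_num) 1)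
      have h' : Tendsto (fun x : ℝ => Real.exp (-(1/2) * x)) atTop (𝓝 0) := by
        apply Real.tendsto_exp_atBot.comp
        exact tendsto_id.const_mul_atTop_of_neg (by norm_num)
      have := (h.trans_tendsto h').div_const N
      simpa using this
    have := ht.comp (tendsto_norm_cobounded_atTop (E := ℝ))
    refine this.congr fun x => ?_
    simp [hφ, mul_div_assoc]
  have h3 := tendsto_integral_comp_smul_smul_of_integrable' (μ := (volume : Measure ℝ))
    (φ := φ) (fun x => by positivity) h1 h2 (g := indicator (Icc p q) vt) (x₀ := x₀)
    ((integrable_indicator_iff measurableSet_Icc).2 (hc.integrableOn_Icc))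
    (by
      have hmem : Icc p q ∈ 𝓝 x₀ := Icc_mem_nhds hx.1 hx.2
      have := (hc x₀ (mem_of_mem_nhds hmem)).continuousAt hmem
      apply this.congr
      filter_upwards [hmem] with y hy
      rw [indicator_of_mem hy])
  rw [indicator_of_mem (Ioo_subset_Icc_self hx), hz] at h3
  have h4 := h3.const_mul N
  rw [mul_zero] at h4
  refine h4.congr' ?_
  filter_upwards [eventually_gt_atTop (0:ℝ)] with c hc0
  rw [← integral_const_mul, intervalIntegral.integral_of_le hpq, ← integral_Icc_eq_integral_Ioc,
    ← integral_indicator measurableSet_Icc]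
  congr 1
  ext x
  by_cases hx : x ∈ Icc p q
  · simp only [indicator_of_mem hx, hφ, Gs, smul_eq_mul, Module.finrank_self, pow_one]
    have e : Real.sqrt (1/c^2) = 1/c := by
      rw [Real.sqrt_div zero_le_one, Real.sqrt_one, Real.sqrt_sq hc0.le]
    rw [e]
    have e2 : -(x - x₀)^2 / (4 * (1/c^2)) = -(1/4) * (c * (x₀ - x))^2 := by
      field_simp; ring
    rw [e2]
    field_simp
  · simp [indicator_of_notMem hx]

lemma local_zero {b ω : ℝ → ℝ} {b0 b1 ω0 ω1 : ℝ} (hC : Cond1 b ω b0 b1 ω0 ω1) {t₀ τ : ℝ}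
    {u r u' uxx : ℝ → Hsp} (hu : IsStrongSolutionWith b ω t₀ u r u' uxx) (hnn : NonnegOn u t₀)
    (ht₀ : t₀ < τ) {vt : ℝ → ℝ} (hc : ContinuousOn vt (Icc 0 1))
    (hv : ∀ᵐ x ∂μ01, vt x = u τ x)
    {x₀ L : ℝ} (hL : 0 < L) (h0 : 0 < x₀ - L) (h1 : x₀ + L < 1) (hz : vt x₀ = 0) :
    ∀ x ∈ Ioo (x₀ - L) (x₀ + L), vt x = 0 := by
  have hpq : x₀ - L ≤ x₀ + L := by linarith
  have hI : Icc (x₀ - L) (x₀ + L) ⊆ Ioo 0 1 := fun x hx =>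
    ⟨by linarith [hx.1], by linarith [hx.2]⟩
  have hpI : x₀ - L ∈ Icc (0:ℝ) 1 := ⟨by linarith, by linarith⟩
  have hqI : x₀ + L ∈ Icc (0:ℝ) 1 := ⟨by linarith, by linarith⟩
  have hcI : ContinuousOn vt (Icc (x₀ - L) (x₀ + L)) :=
    hc.mono (hI.trans Ioo_subset_Icc_self)
  have hvt := nonneg_rep hc hv (hnn τ ht₀.le)
  have hv' := (ae_restrict_iff' measurableSet_Ioo).1 hv
  -- Step 1
  have step1 : ∀ s, t₀ < s → s < τ → τ - s < L^2/2 →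
      inner ℝ (u s) (toH (x₀ - L) (x₀ + L) (Ps x₀ L (τ - s))) ≤ 0 := by
    intro s hs hsτ hsL
    have l1 := gauss_lim hcI (x₀ := x₀) ⟨by linarith, by linarith⟩ hz
    have l0 : Tendsto (fun c : ℝ => 1/c^2) atTop (𝓝 0) := by
      have h := (tendsto_pow_atTop (α := ℝ) (n := 2) (by norm_num)).inv_tendsto_atTop
      refine h.congr fun c => ?_
      simp
    have l2 : Tendsto (fun c : ℝ => inner ℝ (u s)
        (toH (x₀ - L) (x₀ + L) (Ps x₀ L (τ + 1/c^2 - s)))) atTop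
        (𝓝 (inner ℝ (u s) (toH (x₀ - L) (x₀ + L) (Ps x₀ L (τ - s))))) := by
      have hcont := (Psi_deriv (x₀ := x₀) (L := L) (p := x₀ - L) (q := x₀ + L)
        (σ := τ - s) (by linarith)).continuousAt
      have l3 : Tendsto (fun c : ℝ => τ + 1/c^2 - s) atTop (𝓝 (τ - s)) := by
        simpa using (l0.const_add τ).sub_const s
      exact (tendsto_const_nhds.inner (hcont.tendsto.comp l3))
    refine le_of_tendsto_of_tendsto l2 l1 ?_
    filter_upwards [eventually_gt_atTop (0:ℝ), l0.eventually (gt_mem_nhds (sub_pos.2 hsL))]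
      with c hc0 hcL
    have hρ : 0 < 1/c^2 := by positivity
    refine (key_mono hC hu hnn hL h0 h1 hs hsτ.le hρ (by linarith)).trans ?_
    rw [inner_toH h0 hpq h1 _ (Ps_cont _ _ _)]
    apply intervalIntegral.integral_mono_ae_restrict hpq
    · exact (ii_H _ hpI hqI).mul_continuousOn (Ps_cont _ _ _).continuousOn
    · refine (ContinuousOn.mul ?_ ?_).intervalIntegrable
      · rw [uIcc_of_le hpq]; exact hcI
      · exact ((Gs_cont _).comp (by fun_prop)).continuousOn
    · rw [Filter.EventuallyLE, ae_restrict_iff' measurableSet_Icc]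
      filter_upwards [hv'] with x hx hx'
      rw [← hx (hI hx')]
      apply mul_le_mul_of_nonneg_left _ (hvt x (hI hx'))
      have := Gs_pos (y := L) hρ
      unfold Ps; linarith
  -- Step 2
  have step2 : ∀ s, t₀ < s → s < τ → τ - s < L^2/2 →
      inner ℝ (u s) (toH (x₀ - L) (x₀ + L) (fun _ => 1)) = 0 := by
    intro s hs hsτ hsL
    have h := step1 s hs hsτ hsL
    rw [inner_toH h0 hpq h1 _ (Ps_cont _ _ _)] at h
    rw [inner_toH h0 hpq h1 _ continuous_const]
    have hns := (ae_restrict_iff' measurableSet_Ioo).1 (hnn s hs.le)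
    have hσ : 0 < τ - s := by linarith
    have hn : 0 ≤ᵐ[volume.restrict (Ioc (x₀ - L) (x₀ + L))]
        fun x => u s x * Ps x₀ L (τ - s) x := by
      rw [Filter.EventuallyLE, ae_restrict_iff' measurableSet_Ioc]
      filter_upwards [hns] with x hx hx'
      exact mul_nonneg (hx (hI (Ioc_subset_Icc_self hx'))) (Ps_nonneg hσ (Ioc_subset_Icc_self hx'))
    have hge := intervalIntegral.integral_nonneg_of_ae_restrict (μ := volume) hpq
      (f := fun x => u s x * Ps x₀ L (τ - s) x) (by
        rw [Filter.EventuallyLE, ae_restrict_iff' measurableSet_Icc]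
        filter_upwards [hns] with x hx hx'
        exact mul_nonneg (hx (hI hx')) (Ps_nonneg hσ hx'))
    have hzero := (intervalIntegral.integral_eq_zero_iff_of_le_of_nonneg_ae hpq hn
      ((ii_H _ hpI hqI).mul_continuousOn (Ps_cont _ _ _).continuousOn)).1 (le_antisymm h hge)
    rw [Filter.EventuallyEq, ae_restrict_iff' measurableSet_Ioc] at hzero
    apply intervalIntegral.integral_zero_ae
    have hne : ∀ᵐ t : ℝ, t ≠ x₀ + L := by simp [ae_iff, measure_singleton]
    filter_upwards [hzero, hne] with x hx hxne hx'
    rw [uIoc_of_le hpq] at hx'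
    have := hx hx'
    rcases mul_eq_zero.1 this with h | h
    · rw [h, zero_mul]
    · exact absurd h (Ps_pos hσ ⟨hx'.1, lt_of_le_of_ne hx'.2 hxne⟩).ne'
  -- Step 3
  have step3 : inner ℝ (u τ) (toH (x₀ - L) (x₀ + L) (fun _ => 1)) = 0 := by
    have hcu : ContinuousAt u τ := (hu.cont τ ht₀.le).continuousAt (Ici_mem_nhds ht₀)
    have l : Tendsto (fun s => inner ℝ (u s) (toH (x₀ - L) (x₀ + L) (fun _ => 1))) (𝓝[<] τ)
        (𝓝 (inner ℝ (u τ) (toH (x₀ - L) (x₀ + L) (fun _ => 1)))) :=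
      (hcu.tendsto.mono_left nhdsWithin_le_nhds).inner tendsto_const_nhds
    refine tendsto_nhds_unique l (tendsto_const_nhds.congr' ?_)
    have hL2 : 0 < L^2/2 := by positivity
    have hm : max t₀ (τ - L^2/2) < τ := max_lt ht₀ (by linarith)
    filter_upwards [Ioo_mem_nhdsLT hm] with s hs
    exact (step2 s (lt_of_le_of_lt (le_max_left _ _) hs.1) hs.2
      (by linarith [lt_of_le_of_lt (le_max_right _ _) hs.1])).symm
  rw [inner_toH h0 hpq h1 _ continuous_const] at step3
  have hn : 0 ≤ᵐ[volume.restrict (Ioc (x₀ - L) (x₀ + L))] fun x => u τ x * 1 := by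
    rw [Filter.EventuallyLE, ae_restrict_iff' measurableSet_Ioc]
    filter_upwards [(ae_restrict_iff' measurableSet_Ioo).1 (hnn τ ht₀.le)] with x hx hx'
    simpa using hx (hI (Ioc_subset_Icc_self hx'))
  have hzero := (intervalIntegral.integral_eq_zero_iff_of_le_of_nonneg_ae hpq hn
      ((ii_H _ hpI hqI).mul_continuousOn continuousOn_const)).1 step3
  rw [Filter.EventuallyEq, ae_restrict_iff' measurableSet_Ioc] at hzero
  have hae : vt =ᵐ[volume.restrict (Ioo (x₀ - L) (x₀ + L))] fun _ => 0 := by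
    rw [Filter.EventuallyEq, ae_restrict_iff' measurableSet_Ioo]
    filter_upwards [hzero, hv'] with x e1 e2 hx
    rw [e2 (hI (Ioo_subset_Icc_self hx))]
    simpa using e1 (Ioo_subset_Ioc_self hx)
  intro x hx
  exact Measure.eqOn_Ioo_of_ae_eq volume hae (hcI.mono Ioo_subset_Icc_self) continuousOn_const hx


/-- if `u_τ ∈ V` is non-negative, vanishes at some interior point
but is not identically zero, then there is no non-negative strong solution
backwards in time attaining the value `u_τ` at time `τ`. -/
theorem statement3
    (b ω : ℝ → ℝ) (b0 b1 ω0 ω1 τ : ℝ) (hC : Cond1 b ω b0 b1 ω0 ω1)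
    (uτ : Hsp) (vt : ℝ → ℝ) (hV : InVRep uτ vt)
    (hnn : ∀ᵐ x ∂μ01, 0 ≤ uτ x)
    (x₀ : ℝ) (hx₀ : x₀ ∈ Ioo (0:ℝ) 1) (hzero : vt x₀ = 0)
    (hne : uτ ≠ 0) :
    ¬ ∃ t₀, t₀ < τ ∧ ∃ u : ℝ → Hsp,
        IsStrongSolution b ω t₀ u ∧ NonnegOn u t₀ ∧ u τ = uτ := by
  rintro ⟨t₀, ht₀, u, ⟨r, u', uxx, hu⟩, hnnu, huτ⟩
  obtain ⟨hc, -, -, hv, -⟩ := hV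
  apply hne
  have hv2 : ∀ᵐ x ∂μ01, vt x = u τ x := by rw [huτ]; exact hv
  set S : Set ℝ := {x | x ∈ Ioo (0:ℝ) 1 ∧ vt x = 0} with hS
  have hopen : IsOpen S := by
    rw [isOpen_iff_mem_nhds]
    rintro x ⟨hx, hx0⟩
    obtain ⟨L, hL, hLx⟩ : ∃ L, 0 < L ∧ (0 < x - L ∧ x + L < 1) := by
      have h1 := hx.1
      have h2 : 0 < 1 - x := by linarith [hx.2]
      refine ⟨min x (1 - x) / 2, by positivity, ?_, ?_⟩
      · linarith [min_le_left x (1-x)]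
      · linarith [min_le_right x (1-x)]
    have := local_zero hC hu hnnu ht₀ hc hv2 hL hLx.1 hLx.2 hx0
    filter_upwards [Ioo_mem_nhds (show x - L < x by linarith) (show x < x + L by linarith)]
      with y hy
    exact ⟨⟨by linarith [hy.1, hLx.1], by linarith [hy.2, hLx.2]⟩, this y hy⟩
  have hsub : Ioo (0:ℝ) 1 ⊆ S := by
    apply isPreconnected_Ioo.subset_of_closure_inter_subset hopen ⟨x₀, hx₀, hx₀, hzero⟩
    rintro x ⟨hxc, hx⟩
    refine ⟨hx, ?_⟩
    have hcw : ContinuousWithinAt vt S x :=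
      (hc x (Ioo_subset_Icc_self hx)).mono (fun y hy => Ioo_subset_Icc_self hy.1)
    have := hcw.mem_closure hxc (t := {0}) (fun y hy => hy.2)
    simpa using this
  apply Lp.ext
  have hin : ∀ᵐ x ∂μ01, x ∈ Ioo (0:ℝ) 1 := ae_restrict_mem measurableSet_Ioo
  filter_upwards [hv, hin, Lp.coeFn_zero ℝ 2 μ01] with x e1 e2 e3
  rw [← e1, e3, (hsub e2).2]; rfl

end
end

section
/- Assume condition (Cond1). If u_τ ≡ 0, then the unique non-negative strong solution to problem (Incl) backwards in time is the zero solution; that is, any non-negative strong solution u defined on [t₀,∞) with t₀ < τ and u(τ) ≡ 0 satisfies u(t) ≡ 0 for all t₀ ≤ t ≤ τ. -/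
open MeasureTheory Set

noncomputable section

open Filter Topology

lemma w_ii (w : Hsp) : IntervalIntegrable (fun x => w x) volume 0 1 := by
  rw [intervalIntegrable_iff_integrableOn_Ioo_of_le zero_le_one]
  have : IsFiniteMeasure μ01 := by unfold μ01; infer_instance
  exact (Lp.memLp w).integrable (by norm_num)

lemma setup {v w : Hsp} (h : InDomainA v w) :
    ∃ vt G : ℝ → ℝ, ContinuousOn vt (Icc 0 1) ∧ vt 0 = 0 ∧ vt 1 = 0 ∧
    (∀ᵐ x ∂μ01, vt x = v x) ∧ (∀ x ∈ Ioo (0:ℝ) 1, HasDerivAt vt (G x) x) ∧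
    AbsolutelyContinuousOnInterval G 0 1 ∧
    (∀ᵐ x, x ∈ uIcc (0:ℝ) 1 → HasDerivAt G (w x) x) := by
  obtain ⟨vt, hc, h0, h1, hae, g, hg, hgw⟩ := h
  have hw := w_ii w
  have hh : (1/2:ℝ) ∈ uIcc (0:ℝ) 1 := by rw [uIcc_of_le zero_le_one]; constructor <;> norm_num
  refine ⟨vt, fun x => g (1/2) + ∫ z in (1/2)..x, w z, hc, h0, h1, hae, ?_, ?_, ?_⟩
  · intro x hx
    have := hgw x hx (1/2) (by constructor <;> norm_num)
    have e : g (1/2) + ∫ z in (1/2)..x, w z = g x := by rw [← this]; ring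
    show HasDerivAt vt (g (1/2) + ∫ z in (1/2)..x, w z) x
    rw [e]; exact hg x hx
  · have h2 := hw.absolutelyContinuousOnInterval_intervalIntegral hh
    have h3 : AbsolutelyContinuousOnInterval (fun _ : ℝ => g (1/2)) 0 1 :=
      ((LipschitzWith.const (g (1/2))).lipschitzOnWith (s := uIcc (0:ℝ) 1)).absolutelyContinuousOnInterval
    exact h3.fun_add h2
  · filter_upwards [hw.ae_hasDerivAt_integral] with x hx hxm
    exact (hx hxm _ hh).const_add _

lemma vt_nonneg {v : Hsp} {vt : ℝ → ℝ} (hc : ContinuousOn vt (Icc 0 1))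
    (hae : ∀ᵐ x ∂μ01, vt x = v x) (hv : ∀ᵐ x ∂μ01, 0 ≤ v x) :
    ∀ x ∈ Ioo (0:ℝ) 1, 0 ≤ vt x := by
  intro x hx
  by_contra hlt
  push Not at hlt
  have hc' : ContinuousAt vt x := hc.continuousAt (Icc_mem_nhds hx.1 hx.2)
  have hN : {z | vt z < 0} ∩ Ioo 0 1 ∈ 𝓝 x :=
    inter_mem (hc'.eventually (gt_mem_nhds hlt)) (Ioo_mem_nhds hx.1 hx.2)
  have hpos := MeasureTheory.Measure.measure_pos_of_mem_nhds volume hN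
  have hz : μ01 {z | vt z < 0} = 0 := by
    have : ∀ᵐ x ∂μ01, ¬ (vt x < 0) := by
      filter_upwards [hae, hv] with x h1 h2
      rw [h1]; exact not_lt.mpr h2
    simpa [ae_iff] using this
  have : volume ({z | vt z < 0} ∩ Ioo 0 1) ≤ μ01 {z | vt z < 0} := by
    unfold μ01; exact Measure.le_restrict_apply _ _
  rw [hz] at this
  exact absurd hpos (not_lt.mpr this)

lemma zero_set {v w : Hsp} (h : InDomainA v w) (hv : ∀ᵐ x ∂μ01, 0 ≤ v x) :
    ∀ᵐ x ∂μ01, v x = 0 → w x = 0 := by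
  obtain ⟨vt, G, hc, h0, h1, hae, hg, hG, hGw⟩ := setup h
  have hnn := vt_nonneg hc hae hv
  have hcount : Set.Countable {x : ℝ | x ∈ {x : ℝ | G x = 0} ∧ 𝓝[{x : ℝ | G x = 0} ∩ Ioi x] x = ⊥} :=
    countable_setOfPred_isolated_right_within
  have hnull : ∀ᵐ x ∂μ01, ¬ (x ∈ {x : ℝ | G x = 0} ∧ 𝓝[{x : ℝ | G x = 0} ∩ Ioi x] x = ⊥) := by
    unfold μ01
    apply ae_restrict_of_ae
    rw [ae_iff]; simp only [not_not]
    exact hcount.measure_zero volume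
  have hGw' : ∀ᵐ x ∂μ01, x ∈ uIcc (0:ℝ) 1 → HasDerivAt G (w x) x := ae_restrict_of_ae hGw
  have hmem : ∀ᵐ x ∂μ01, x ∈ Ioo (0:ℝ) 1 := ae_restrict_mem measurableSet_Ioo
  filter_upwards [hnull, hGw', hmem, hae] with x hx1 hx2 hx3 hx4 hx5
  by_contra hne
  have hd := hx2 (by rw [uIcc_of_le zero_le_one]; exact Ioo_subset_Icc_self hx3)
  have hG0 : G x = 0 := by
    have hmin : IsLocalMin vt x := by
      filter_upwards [Ioo_mem_nhds hx3.1 hx3.2] with z hz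
      rw [hx4, hx5]; exact hnn z hz
    exact hmin.hasDerivAt_eq_zero (hg x hx3)
  have he : ∀ᶠ z in 𝓝[≠] x, G z ≠ 0 := hd.eventually_ne hne
  have he' : ∀ᶠ z in 𝓝[>] x, G z ≠ 0 :=
    he.filter_mono (nhdsWithin_mono _ (fun z hz => ne_of_gt hz))
  refine hx1 ⟨hG0, ?_⟩
  rw [← Filter.empty_mem_iff_bot, inter_comm, nhdsWithin_inter']
  filter_upwards [mem_inf_of_left he', mem_inf_of_right (mem_principal_self _)] with z hz hz2
  exact hz hz2

lemma parts {v w : Hsp} (h : InDomainA v w) :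
    ∫ x, Real.sin (Real.pi * x) * w x ∂μ01 =
      -Real.pi^2 * ∫ x, Real.sin (Real.pi * x) * v x ∂μ01 := by
  obtain ⟨vt, G, hc, h0, h1, hae, hg, hG, hGw⟩ := setup h
  have hd1 : ∀ x : ℝ, HasDerivAt (fun x => Real.sin (Real.pi * x)) (Real.pi * Real.cos (Real.pi * x)) x := by
    intro x
    have := ((hasDerivAt_id' x).const_mul Real.pi).sin
    convert this using 1; ring
  have hd2 : ∀ x : ℝ, HasDerivAt (fun x => Real.pi * Real.cos (Real.pi * x)) (-Real.pi^2 * Real.sin (Real.pi * x)) x := by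
    intro x
    have := HasDerivAt.const_mul Real.pi (((hasDerivAt_id' x).const_mul Real.pi).cos)
    have e : -Real.pi^2 * Real.sin (Real.pi * x) = Real.pi * (-Real.sin (Real.pi * x) * (Real.pi * 1)) := by ring
    rw [e]; exact this
  have conv : ∀ f : ℝ → ℝ, ∫ x, f x ∂μ01 = ∫ x in (0:ℝ)..1, f x := by
    intro f
    rw [intervalIntegral.integral_of_le zero_le_one, integral_Ioc_eq_integral_Ioo]; rfl
  have hsac : AbsolutelyContinuousOnInterval (fun x => Real.sin (Real.pi * x)) 0 1 := by
    have hl : LipschitzWith NNReal.pi (fun x => Real.sin (Real.pi * x)) := by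
      apply lipschitzWith_of_nnnorm_deriv_le (fun x => (hd1 x).differentiableAt)
      intro x
      rw [(hd1 x).deriv, ← NNReal.coe_le_coe]
      simp only [coe_nnnorm, norm_mul, Real.norm_eq_abs, abs_of_pos Real.pi_pos, NNReal.coe_real_pi]
      have := Real.abs_cos_le_one (Real.pi * x)
      nlinarith [Real.pi_pos]
    exact (hl.lipschitzOnWith (s := uIcc (0:ℝ) 1)).absolutelyContinuousOnInterval
  have e1 := hsac.integral_mul_deriv_eq_deriv_mul hG
  have e1l : ∫ x in (0:ℝ)..1, Real.sin (Real.pi * x) * deriv G x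
      = ∫ x in (0:ℝ)..1, Real.sin (Real.pi * x) * w x := by
    apply intervalIntegral.integral_congr_ae
    filter_upwards [hGw] with x hx hxm
    rw [(hx (uIoc_subset_uIcc hxm)).deriv]
  have e2 := intervalIntegral.integral_mul_deriv_eq_deriv_mul_of_hasDerivAt (a := 0) (b := 1)
    (u := fun x => Real.pi * Real.cos (Real.pi * x)) (u' := fun x => -Real.pi^2 * Real.sin (Real.pi * x))
    (v := vt) (v' := G) (by fun_prop) (by rw [uIcc_of_le zero_le_one]; exact hc)
    (fun x _ => hd2 x) (by simpa using hg) (Continuous.intervalIntegrable (by fun_prop) _ _)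
    (hG.continuousOn.intervalIntegrable)
  have e3 : ∫ x, Real.sin (Real.pi * x) * v x ∂μ01 = ∫ x, Real.sin (Real.pi * x) * vt x ∂μ01 := by
    apply integral_congr_ae
    filter_upwards [hae] with x hx
    rw [hx]
  rw [e3, conv, conv, ← e1l, e1]
  simp only [(hd1 _).deriv]
  rw [e2, ← intervalIntegral.integral_const_mul]
  simp [h0, h1, mul_assoc]

lemma deriv_nonneg {u : ℝ → Hsp} {d : Hsp} {t : ℝ} (hd : HasDerivAt u d t)
    (hn : ∀ s, t ≤ s → ∀ᵐ x ∂μ01, 0 ≤ u s x) :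
    ∀ᵐ x ∂μ01, u t x = 0 → 0 ≤ d x := by
  have hs := hasDerivAt_iff_tendsto_slope.1 hd
  have hseq : Tendsto (fun n : ℕ => t + 1 / ((n:ℝ) + 1)) atTop (𝓝[≠] t) := by
    apply tendsto_nhdsWithin_iff.2 ⟨?_, ?_⟩
    · simpa using tendsto_one_div_add_atTop_nhds_zero_nat.const_add t
    · refine Eventually.of_forall fun n => ?_
      have : (0:ℝ) < 1 / ((n:ℝ) + 1) := by positivity
      simp only [mem_compl_iff, mem_singleton_iff]; linarith
  have ht := hs.comp hseq
  have hm : TendstoInMeasure μ01 (fun n : ℕ => ((slope u t (t + 1 / ((n:ℝ) + 1)) : Hsp) : ℝ → ℝ)) atTop d :=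
    tendstoInMeasure_of_tendsto_Lp ht
  obtain ⟨ns, hns, hlim⟩ := hm.exists_seq_tendsto_ae
  have hall : ∀ᵐ x ∂μ01, ∀ n : ℕ, u t x = 0 → 0 ≤ (slope u t (t + 1 / ((n:ℝ) + 1)) : Hsp) x := by
    rw [ae_all_iff]
    intro n
    have hp : (0:ℝ) < 1 / ((n:ℝ) + 1) := by positivity
    rw [slope_def_module]
    filter_upwards [Lp.coeFn_smul (t + 1 / ((n:ℝ) + 1) - t)⁻¹ (u (t + 1 / ((n:ℝ) + 1)) - u t),
      Lp.coeFn_sub (u (t + 1 / ((n:ℝ) + 1))) (u t), hn (t + 1 / ((n:ℝ) + 1)) (by linarith)] with x h1 h2 h3 h4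
    rw [h1, Pi.smul_apply, h2, Pi.sub_apply, h4, sub_zero, smul_eq_mul]
    apply mul_nonneg _ h3
    rw [add_sub_cancel_left]; positivity
  filter_upwards [hall, hlim] with x h1 h2 h3
  exact ge_of_tendsto' h2 (fun n => h1 _ h3)

lemma sin_memLp : MemLp (fun x => Real.sin (Real.pi * x)) 2 μ01 := by
  have : IsFiniteMeasure μ01 := by unfold μ01; infer_instance
  refine MemLp.of_bound (Continuous.aestronglyMeasurable (by fun_prop)) 1 ?_
  exact Eventually.of_forall fun x => Real.abs_sin_le_one _

/-- pairing with the first eigenfunction -/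
def Lsin : Hsp →L[ℝ] ℝ := innerSL ℝ (sin_memLp.toLp _)

lemma Lsin_apply (v : Hsp) : Lsin v = ∫ x, Real.sin (Real.pi * x) * v x ∂μ01 := by
  unfold Lsin
  rw [innerSL_apply_apply, L2.inner_def]
  apply integral_congr_ae
  filter_upwards [sin_memLp.coeFn_toLp] with x hx
  rw [hx]; simp [mul_comm]

lemma sin_pos_ae : ∀ᵐ x ∂μ01, 0 < Real.sin (Real.pi * x) := by
  have hmem : ∀ᵐ x ∂μ01, x ∈ Ioo (0:ℝ) 1 := ae_restrict_mem measurableSet_Ioo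
  filter_upwards [hmem] with x hx
  apply Real.sin_pos_of_pos_of_lt_pi
  · exact mul_pos Real.pi_pos hx.1
  · nlinarith [Real.pi_pos, hx.2]

lemma Lsin_nonneg {v : Hsp} (hv : ∀ᵐ x ∂μ01, 0 ≤ v x) : 0 ≤ Lsin v := by
  rw [Lsin_apply]
  apply integral_nonneg_of_ae
  filter_upwards [hv, sin_pos_ae] with x h1 h2
  exact mul_nonneg h2.le h1

lemma Lsin_zero {v : Hsp} (hv : ∀ᵐ x ∂μ01, 0 ≤ v x) (h : Lsin v = 0) : v = 0 := by
  rw [Lsin_apply, integral_eq_zero_iff_of_nonneg_ae] at h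
  · apply (Lp.eq_zero_iff_ae_eq_zero).2
    filter_upwards [h, sin_pos_ae] with x h1 h2
    simpa [h2.ne'] using h1
  · filter_upwards [hv, sin_pos_ae] with x h1 h2
    exact mul_nonneg h2.le h1
  · exact sin_memLp.integrable_mul (Lp.memLp v)

lemma gron {y : ℝ → ℝ} {a τ c : ℝ} (haτ : a ≤ τ) (hc : ContinuousOn y (Icc a τ))
    (hn : ∀ t ∈ Icc a τ, 0 ≤ y t)
    (h : ∀ t ∈ Icc a τ, y t ≤ c * ∫ s in t..τ, y s) : y a = 0 := by
  have hii : ∀ t ∈ Icc a τ, IntervalIntegrable y volume t τ := fun t ht =>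
    ContinuousOn.intervalIntegrable (by rw [uIcc_of_le ht.2]; exact hc.mono (Icc_subset_Icc_left ht.1))
  have hmono : MonotoneOn (fun t => Real.exp (c * t) * ∫ s in t..τ, y s) (Icc a τ) := by
    have hder : ∀ t ∈ Ioo a τ, HasDerivAt (fun t => Real.exp (c * t) * ∫ s in t..τ, y s)
        (Real.exp (c * t) * c * (∫ s in t..τ, y s) + Real.exp (c * t) * (- y t)) t := by
      intro t ht
      have h1 : HasDerivAt (fun t => Real.exp (c * t)) (Real.exp (c * t) * c) t := by
        simpa using ((hasDerivAt_id t).const_mul c).exp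
      have hca : ContinuousAt y t := hc.continuousAt (Icc_mem_nhds ht.1 ht.2)
      have h2 := intervalIntegral.integral_hasDerivAt_left (hii t (Ioo_subset_Icc_self ht))
        (ContinuousOn.stronglyMeasurableAtFilter isOpen_Ioo (hc.mono Ioo_subset_Icc_self) t ht) hca
      exact h1.mul h2
    apply monotoneOn_of_deriv_nonneg (convex_Icc a τ)
    · apply ContinuousOn.mul (by fun_prop)
      have := intervalIntegral.continuousOn_primitive_interval_left (a := a) (b := τ) (μ := volume) (f := y)
        (by rw [uIcc_of_le haτ]; exact hc.integrableOn_Icc)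
      rwa [uIcc_of_le haτ] at this
    · rw [interior_Icc]
      exact fun t ht => (hder t ht).differentiableAt.differentiableWithinAt
    · rw [interior_Icc]
      intro t ht
      rw [(hder t ht).deriv]
      have := h t (Ioo_subset_Icc_self ht)
      have he := Real.exp_pos (c * t)
      nlinarith
  have ha : a ∈ Icc a τ := ⟨le_rfl, haτ⟩
  have h1 := hmono ha ⟨haτ, le_rfl⟩ haτ
  simp only [intervalIntegral.integral_same, mul_zero] at h1
  have h2 : 0 ≤ ∫ s in a..τ, y s := intervalIntegral.integral_nonneg haτ hn
  have h3 : ∫ s in a..τ, y s = 0 := by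
    have := Real.exp_pos (c * a)
    by_contra hne
    have : 0 < ∫ s in a..τ, y s := lt_of_le_of_ne h2 (Ne.symm hne)
    nlinarith [mul_pos (Real.exp_pos (c * a)) this]
  have h4 := h a ha
  rw [h3, mul_zero] at h4
  exact le_antisymm h4 (hn a ha)

lemma main_open
    (b ω : ℝ → ℝ) (b0 b1 ω0 ω1 τ : ℝ) (hC : Cond1 b ω b0 b1 ω0 ω1)
    (t₀ : ℝ) (u : ℝ → Hsp)
    (hsol : IsStrongSolution b ω t₀ u) (hnneg : NonnegOn u t₀)
    (hτ : u τ = 0) (a : ℝ) (hta : t₀ < a) (haτ : a ≤ τ) : u a = 0 := by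
  obtain ⟨r, u', uxx, hs⟩ := hsol
  apply Lsin_zero (hnneg a hta.le)
  have hII : ∀ T1 T2, t₀ < T1 → T1 ≤ T2 → IntervalIntegrable u' volume T1 T2 := fun T1 T2 h h2 =>
    (hs.fund T1 (T2+1) h (by linarith)).1.mono_set (by
      rw [uIcc_of_le h2, uIcc_of_le (by linarith)]; exact Icc_subset_Icc_right (by linarith))
  have hcont : ContinuousOn (fun t => Lsin (u t)) (Icc a τ) :=
    Lsin.continuous.comp_continuousOn (hs.cont.mono fun t ht => hta.le.trans ht.1)
  have hkey : ∀ᵐ t, t ∈ Ioo a τ → -Real.pi^2 * Lsin (u t) ≤ Lsin (u' t) := by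
    obtain ⟨hi, hf⟩ := hs.fund a (τ+1) hta (by linarith)
    have hsel := (ae_restrict_iff' measurableSet_Ioi).1 hs.sel
    have hdom := (ae_restrict_iff' measurableSet_Ioi).1 hs.dom
    have heq := (ae_restrict_iff' measurableSet_Ioi).1 hs.eq
    filter_upwards [hi.ae_hasDerivAt_integral, hsel, hdom, heq] with t h1 h2 h3 h4 ht
    have ht0 : t₀ < t := hta.trans ht.1
    specialize h2 ht0
    specialize h3 ht0
    specialize h4 ht0
    have hD : HasDerivAt u (u' t) t := by
      have hle : a ≤ τ + 1 := by linarith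
      have := (h1 (by rw [uIcc_of_le hle]; exact ⟨ht.1.le, by linarith [ht.2]⟩) a (by simp)).const_add (u a)
      apply this.congr_of_eventuallyEq
      filter_upwards [Ioo_mem_nhds ht.1 ht.2] with s hs'
      exact hf s ⟨hs'.1.le, by linarith [hs'.2]⟩
    have hnt := hnneg t ht0.le
    have hd := deriv_nonneg hD (fun s hs' => hnneg s (ht0.le.trans hs'))
    have hz := zero_set h3 hnt
    have hr : ∀ᵐ x ∂μ01, 0 ≤ r t x := by
      filter_upwards [hnt, hd, hz, h2, Lp.coeFn_add (r t) (uxx t)] with x k1 k2 k3 k4 k5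
      rcases k1.eq_or_lt with k | k
      · have k2' := k2 k.symm
        rw [h4, k5, Pi.add_apply, k3 k.symm, add_zero] at k2'
        exact k2'
      · obtain ⟨h, hh, e⟩ := k4
        have : h = 1 := by
          simpa [heaviside, not_lt.mpr k.le, k.ne'] using hh
        rw [e, this]
        have := hC.blb t
        have := hC.b0pos
        have := mul_nonneg (hC.ω0nonneg.trans (hC.ωlb t)) k1
        linarith
    have hp := parts h3
    rw [← Lsin_apply, ← Lsin_apply] at hp
    rw [h4, map_add, hp]
    linarith [Lsin_nonneg hr]
  refine gron (c := Real.pi^2) haτ hcont (fun t ht => Lsin_nonneg (hnneg t (hta.le.trans ht.1))) ?_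
  intro t ht
  have ht0 : t₀ < t := hta.trans_le ht.1
  have hf := (hs.fund t (τ+1) ht0 (by linarith [ht.2])).2 τ ⟨ht.2, by linarith⟩
  have hi := hII t τ ht0 ht.2
  have e := congrArg Lsin hf
  rw [hτ, map_zero, map_add, ← Lsin.intervalIntegral_comp_comm hi] at e
  have hmono : ∫ s in t..τ, -Real.pi^2 * Lsin (u s) ≤ ∫ s in t..τ, Lsin (u' s) := by
    rw [intervalIntegral.integral_of_le ht.2, intervalIntegral.integral_of_le ht.2,
      integral_Ioc_eq_integral_Ioo, integral_Ioc_eq_integral_Ioo]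
    apply setIntegral_mono_on_ae
    · have hc2 : ContinuousOn (fun s => -Real.pi^2 * Lsin (u s)) (Icc t τ) :=
        continuousOn_const.mul (hcont.mono (Icc_subset_Icc_left ht.1))
      exact hc2.integrableOn_Icc.mono_set Ioo_subset_Icc_self
    · exact (Lsin.integrable_comp hi.1).mono_measure (Measure.restrict_mono Ioo_subset_Ioc_self le_rfl)
    · exact measurableSet_Ioo
    · filter_upwards [hkey] with s hs' hm
      exact hs' ⟨ht.1.trans_lt hm.1, hm.2⟩
  rw [intervalIntegral.integral_const_mul] at hmono
  linarith

/-- if `u_τ ≡ 0`, then the unique non-negative strong solution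
backwards in time is the zero solution: any non-negative strong solution on
`[t₀,∞)` with `t₀ < τ` and `u(τ) ≡ 0` vanishes identically on `[t₀,τ]`. -/
theorem statement4
    (b ω : ℝ → ℝ) (b0 b1 ω0 ω1 τ : ℝ) (hC : Cond1 b ω b0 b1 ω0 ω1)
    (t₀ : ℝ) (ht₀ : t₀ < τ) (u : ℝ → Hsp)
    (hsol : IsStrongSolution b ω t₀ u) (hnneg : NonnegOn u t₀)
    (hτ : u τ = 0) :
    ∀ t, t₀ ≤ t → t ≤ τ → u t = 0 := by
  obtain hmain := main_open b ω b0 b1 ω0 ω1 τ hC t₀ u hsol hnneg hτ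
  intro t h1 h2
  rcases h1.eq_or_lt with h | h
  · subst h
    obtain ⟨r, u', uxx, hs⟩ := hsol
    have hc : Tendsto u (𝓝[>] t₀) (𝓝 (u t₀)) :=
      (hs.cont t₀ self_mem_Ici).mono_left (nhdsWithin_mono _ Ioi_subset_Ici_self)
    have he : ∀ᶠ s in 𝓝[>] t₀, u s = 0 := by
      filter_upwards [Ioc_mem_nhdsGT ht₀] with s hs'
      exact hmain s hs'.1 hs'.2
    have hz : Tendsto u (𝓝[>] t₀) (𝓝 0) :=
      tendsto_const_nhds.congr' (he.mono fun s hs' => hs'.symm)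
    exact tendsto_nhds_unique hc hz
  · exact hmain t h h2


end
end
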